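/- With the setup of the projection-slice identity, suppose bin m is 1-sparse with unique contributing pair (m0, m1). Then the complex amplitude is recovered exactly as a(m0, m1) = ŝ_τ(m) · exp(−2πi·(m0·τ0/N0 + m1·τ1/N1)). -/

import Mathlib

open Complex Finset
open scoped Classical

/-- The 2-D on-grid signal `x(n0,n1) = Σ_{(m0,m1)} a(m0,m1)·e^{2πi(m0·n0/N0 + m1·n1/N1)}`. -/
noncomputable def signal2D (N0 N1 : ℕ) (a : Fin N0 × Fin N1 → ℂ) (n0 n1 : ℤ) : ℂ :=
  ∑ p : Fin N0 × Fin N1, a p *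
    Complex.exp (2 * (Real.pi : ℂ) * Complex.I *
      (((p.1 : ℕ) : ℂ) * (n0 : ℂ) / (N0 : ℂ) + ((p.2 : ℕ) : ℂ) * (n1 : ℂ) / (N1 : ℂ)))

/-- The `L`-point DFT of the slice of the signal along the discrete line
`l ↦ (α0·l + τ0, α1·l + τ1)`, where `L = lcm(N0, N1)`. -/
noncomputable def sliceDFT (N0 N1 : ℕ) (a : Fin N0 × Fin N1 → ℂ)
    (α0 α1 τ0 τ1 : ℤ) (m : ℕ) : ℂ :=
  (1 / ((Nat.lcm N0 N1 : ℕ) : ℂ)) *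
    ∑ l ∈ Finset.range (Nat.lcm N0 N1),
      signal2D N0 N1 a (α0 * l + τ0) (α1 * l + τ1) *
        Complex.exp (-(2 * (Real.pi : ℂ) * Complex.I * (l : ℂ) * (m : ℂ) /
          ((Nat.lcm N0 N1 : ℕ) : ℂ)))

/-- The frequency grid point `(m0, m1)` projects onto bin `m`, i.e.
`m0·α0/N0 + m1·α1/N1 − m/L` is an integer. -/
def projectsTo (N0 N1 : ℕ) (α0 α1 : ℤ) (m : ℕ) (p : Fin N0 × Fin N1) : Prop :=
  ∃ k : ℤ, ((p.1 : ℕ) : ℝ) * (α0 : ℝ) / (N0 : ℝ) + ((p.2 : ℕ) : ℝ) * (α1 : ℝ) / (N1 : ℝ)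
    - (m : ℝ) / ((Nat.lcm N0 N1 : ℕ) : ℝ) = (k : ℝ)

/-!
Along the line `l ↦ α l + τ` the signal is an exponential sum in `l`: the grid frequency `p`
contributes the amplitude `a p · e(⟨p, τ⟩)` at the frequency `⟨p, α⟩`, which is a multiple of `1/L`.
The `L`-point DFT at bin `m` averages the characters `l ↦ e(l (⟨p, α⟩ - m/L))`, whose bases are
`L`-th roots of unity. Orthogonality keeps precisely the frequencies congruent to `m/L` modulo `1`;
if only one of them carries a nonzero amplitude, undoing its phase `e(⟨p, τ⟩)` recovers `a p`.
-/

open scoped FourierTransform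

theorem sum_range_pow_of_pow_eq_one {R : Type*} [Ring R] [NoZeroDivisors R] [DecidableEq R]
    {z : R} {n : ℕ} (hz : z ^ n = 1) : ∑ l ∈ range n, z ^ l = if z = 1 then (n : R) else 0 := by
  split_ifs with h
  · simp [h]
  · have hmul : (∑ l ∈ range n, z ^ l) * (z - 1) = 0 := by rw [geom_sum_mul, hz, sub_self]
    exact (mul_eq_zero.mp hmul).resolve_right (sub_ne_zero.mpr h)

theorem fourierChar_eq_one_iff {x : ℝ} : 𝐞 x = 1 ↔ ∃ k : ℤ, x = k := by
  simp only [Real.fourierChar_apply', Circle.exp_eq_one, mul_comm (2 * Real.pi) x,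
    mul_left_inj' Real.two_pi_pos.ne']

theorem coe_fourierChar_add (x y : ℝ) : (𝐞 (x + y) : ℂ) = 𝐞 x * 𝐞 y := by
  rw [AddChar.map_add_eq_mul, Circle.coe_mul]

theorem fourierChar_natCast_mul (l : ℕ) (x : ℝ) : 𝐞 (l * x) = 𝐞 x ^ l := by
  rw [← nsmul_eq_mul, AddChar.map_nsmul_eq_pow]

theorem sum_range_fourierChar {L : ℕ} {x : ℝ} (hx : ∃ k : ℤ, L * x = k) :
    ∑ l ∈ range L, (𝐞 (l * x) : ℂ) = if ∃ k : ℤ, x = k then (L : ℂ) else 0 := by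
  have hroot : (𝐞 x : ℂ) ^ L = 1 := by
    rw [← Circle.coe_pow, ← fourierChar_natCast_mul, fourierChar_eq_one_iff.mpr hx, Circle.coe_one]
  simp only [fourierChar_natCast_mul, Circle.coe_pow, sum_range_pow_of_pow_eq_one hroot,
    Circle.coe_eq_one, fourierChar_eq_one_iff]

/-- The exponential sum `l ↦ ∑ i, c i · e(l θᵢ)`, where `e(x) = exp (2πix)`: a superposition of
finitely many tones with amplitudes `c` and frequencies `θ` (in cycles per sample). -/
noncomputable def expSum {ι : Type*} [Fintype ι] (c : ι → ℂ) (θ : ι → ℝ) (l : ℕ) : ℂ :=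
  ∑ i, c i * 𝐞 (l * θ i)

/-- The `m`-th coefficient `(1/L) ∑_{l < L} s(l) e(-lm/L)` of the `L`-point DFT of a sequence,
normalized so that a pure tone in bin `m` has its amplitude as coefficient. -/
noncomputable def dftCoeff (L : ℕ) (s : ℕ → ℂ) (m : ℤ) : ℂ :=
  1 / L * ∑ l ∈ range L, s l * 𝐞 (-(l * (m / L)))

theorem dftCoeff_expSum {ι : Type*} [Fintype ι] {L : ℕ} (hL : L ≠ 0) (c : ι → ℂ) {θ : ι → ℝ}
    (hθ : ∀ i, ∃ k : ℤ, L * θ i = k) (m : ℤ) :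
    dftCoeff L (expSum c θ) m = ∑ i, if ∃ k : ℤ, θ i - m / L = k then c i else 0 := by
  have hL_real : (L : ℝ) ≠ 0 := Nat.cast_ne_zero.mpr hL
  have hgrid : ∀ i, ∃ k : ℤ, L * (θ i - m / L) = k := fun i => by
    obtain ⟨k, hk⟩ := hθ i
    exact ⟨k - m, by rw [mul_sub, hk, mul_div_cancel₀ _ hL_real, Int.cast_sub]⟩
  have hshift : ∀ i (l : ℕ),
      c i * 𝐞 (l * θ i) * 𝐞 (-(l * (m / L))) = c i * (𝐞 (l * (θ i - m / L)) : ℂ) := fun i l => by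
    rw [mul_assoc, ← coe_fourierChar_add, ← sub_eq_add_neg, ← mul_sub]
  calc dftCoeff L (expSum c θ) m
      = 1 / L * ∑ i, c i * ∑ l ∈ range L, (𝐞 (l * (θ i - m / L)) : ℂ) := by
        simp only [dftCoeff, expSum, sum_mul, mul_sum, hshift]
        rw [sum_comm]
    _ = ∑ i, if ∃ k : ℤ, θ i - m / L = k then c i else 0 := by
        rw [mul_sum]
        refine sum_congr rfl fun i _ => ?_
        rw [sum_range_fourierChar (hgrid i)]
        split_ifs
        · field_simp
        · simp

theorem fps_sft_amplitude_recovery_general {ι : Type*} [Fintype ι] {L : ℕ} (hL : L ≠ 0)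
    (a : ι → ℂ) {θ : ι → ℝ} (hθ : ∀ i, ∃ k : ℤ, L * θ i = k) (φ : ι → ℝ) (m : ℤ) {i₀ : ι}
    (hproj : ∃ k : ℤ, θ i₀ - m / L = k)
    (huniq : ∀ i, a i ≠ 0 → (∃ k : ℤ, θ i - m / L = k) → i = i₀) :
    a i₀ = dftCoeff L (expSum (fun i => a i * 𝐞 (φ i)) θ) m * 𝐞 (-φ i₀) := by
  have hbin : dftCoeff L (expSum (fun i => a i * 𝐞 (φ i)) θ) m = a i₀ * 𝐞 (φ i₀) := by
    rw [dftCoeff_expSum hL _ hθ, sum_eq_single i₀ _ (by simp), if_pos hproj]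
    intro i _ hi
    refine ite_eq_right_iff.mpr fun hi_proj => ?_
    rw [not_imp_comm.mp (fun h => huniq i h hi_proj) hi, zero_mul]
  rw [hbin, AddChar.map_neg_eq_inv, Circle.coe_inv, mul_inv_cancel_right₀ (Circle.coe_ne_zero _)]

section Grid

variable {N0 N1 : ℕ}

/-- The phase `p.1·u/N0 + p.2·v/N1`, in full turns, of the grid frequency `p` at the point `(u, v)`.
At the slope of a line it is the frequency that `p` induces along that line. -/
noncomputable def gridPhase (p : Fin N0 × Fin N1) (u v : ℝ) : ℝ :=
  (p.1 : ℕ) * u / N0 + (p.2 : ℕ) * v / N1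

theorem gridPhase_line (p : Fin N0 × Fin N1) (u v u' v' t : ℝ) :
    gridPhase p (u * t + u') (v * t + v') = gridPhase p u' v' + t * gridPhase p u v := by
  unfold gridPhase
  ring

theorem exists_int_mul_gridPhase {L : ℕ} (h0 : N0 ∣ L) (h1 : N1 ∣ L) (p : Fin N0 × Fin N1)
    (α0 α1 : ℤ) : ∃ k : ℤ, L * gridPhase p α0 α1 = k := by
  obtain ⟨c0, hc0⟩ := h0
  obtain ⟨c1, hc1⟩ := h1
  have hN0 : (N0 : ℝ) ≠ 0 := Nat.cast_ne_zero.mpr p.1.pos.ne'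
  have hN1 : (N1 : ℝ) ≠ 0 := Nat.cast_ne_zero.mpr p.2.pos.ne'
  have hL0 : (L : ℝ) = N0 * c0 := by exact_mod_cast hc0
  have hL1 : (L : ℝ) = N1 * c1 := by exact_mod_cast hc1
  refine ⟨c0 * (p.1 : ℕ) * α0 + c1 * (p.2 : ℕ) * α1, ?_⟩
  calc (L : ℝ) * gridPhase p α0 α1
      = N0 * c0 * ((p.1 : ℕ) * α0 / N0) + N1 * c1 * ((p.2 : ℕ) * α1 / N1) := by
        rw [gridPhase, mul_add, ← hL0, ← hL1]
    _ = _ := by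
        push_cast
        field_simp

theorem fourierChar_gridPhase (p : Fin N0 × Fin N1) (u v : ℝ) :
    (𝐞 (gridPhase p u v) : ℂ) = Complex.exp (2 * (Real.pi : ℂ) * Complex.I *
      (((p.1 : ℕ) : ℂ) * (u : ℂ) / (N0 : ℂ) + ((p.2 : ℕ) : ℂ) * (v : ℂ) / (N1 : ℂ))) := by
  rw [Real.fourierChar_apply, gridPhase]
  push_cast
  ring_nf

theorem signal2D_line (a : Fin N0 × Fin N1 → ℂ) (α0 α1 τ0 τ1 : ℤ) (l : ℕ) :
    signal2D N0 N1 a (α0 * l + τ0) (α1 * l + τ1) =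
      expSum (fun p => a p * 𝐞 (gridPhase p τ0 τ1)) (fun p => gridPhase p α0 α1) l := by
  unfold signal2D expSum
  refine sum_congr rfl fun p _ => ?_
  dsimp only
  rw [mul_assoc (a p), ← coe_fourierChar_add, ← gridPhase_line, fourierChar_gridPhase]
  push_cast
  rfl

theorem sliceDFT_eq_dftCoeff (a : Fin N0 × Fin N1 → ℂ) (α0 α1 τ0 τ1 : ℤ) (m : ℕ) :
    sliceDFT N0 N1 a α0 α1 τ0 τ1 m = dftCoeff (Nat.lcm N0 N1)
      (expSum (fun p => a p * 𝐞 (gridPhase p τ0 τ1)) (fun p => gridPhase p α0 α1)) m := by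
  unfold sliceDFT dftCoeff
  congr! 2 with l
  rw [signal2D_line, Real.fourierChar_apply]
  push_cast
  ring_nf

end Grid

/-- **Exact amplitude recovery from a 1-sparse bin.** If bin `m` is 1-sparse
with unique contributing pair `(m0, m1)`, then the complex amplitude is
recovered exactly as `a(m0,m1) = ŝ_τ(m)·e^{−2πi(m0·τ0/N0 + m1·τ1/N1)}`. -/
theorem fps_sft_amplitude_recovery
    (N0 N1 : ℕ) (hN0 : 0 < N0) (hN1 : 0 < N1)
    (a : Fin N0 × Fin N1 → ℂ) (α0 α1 τ0 τ1 : ℤ)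
    (m : ℕ) (hm : m ∈ Finset.range (Nat.lcm N0 N1))
    (p₀ : Fin N0 × Fin N1) (ha : a p₀ ≠ 0)
    (hproj : projectsTo N0 N1 α0 α1 m p₀)
    (huniq : ∀ q : Fin N0 × Fin N1, a q ≠ 0 → projectsTo N0 N1 α0 α1 m q → q = p₀) :
    a p₀ = sliceDFT N0 N1 a α0 α1 τ0 τ1 m *
      Complex.exp (-(2 * (Real.pi : ℂ) * Complex.I *
        (((p₀.1 : ℕ) : ℂ) * (τ0 : ℂ) / (N0 : ℂ) + ((p₀.2 : ℕ) : ℂ) * (τ1 : ℂ) / (N1 : ℂ)))) := by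
  have hrecover := fps_sft_amplitude_recovery_general (Nat.lcm_pos hN0 hN1).ne' a
    (exists_int_mul_gridPhase (Nat.dvd_lcm_left N0 N1) (Nat.dvd_lcm_right N0 N1) · α0 α1)
    (gridPhase · τ0 τ1) m hproj huniq
  rwa [← sliceDFT_eq_dftCoeff, AddChar.map_neg_eq_inv, Circle.coe_inv, fourierChar_gridPhase,
    ← Complex.exp_neg] at hrecover
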